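/- arXiv:1606.07877 — 4 statements merged into one kernel-verified Lean document; each statement's English description precedes it below -/
import Mathlib

section
/- As r0 ↓ 0, the functions u_{r0} converge to h in L¹(B): lim_{r0 → 0⁺} ∫_B |u_{r0}(x) − h(x)| dx = 0. -/
open Real MeasureTheory Metric Set Filter Topology

/-- The conformal factor `h(x) = 1/(|x|² (log|x|)²)` of the hyperbolic cusp metric. -/
noncomputable def cuspH (x : EuclideanSpace ℝ (Fin 2)) : ℝ :=
  1 / (‖x‖^2 * (Real.log ‖x‖)^2)

/-- The `C¹` approximation `u_{r₀}` of the cusp: a cigar cap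
`ε(r₀)/(δ(r₀)+|x|²)` for `|x| ≤ r₀`, and the cusp `h` for `|x| > r₀`. -/
noncomputable def ucig (r0 : ℝ) (x : EuclideanSpace ℝ (Fin 2)) : ℝ :=
  if ‖x‖ ≤ r0 then
    (1 / ((-Real.log r0) * (-Real.log r0 - 1))) / (r0^2 / (-Real.log r0 - 1) + ‖x‖^2)
  else cuspH x

lemma cusp_radial_integrableOn :
    IntegrableOn (fun r : ℝ => (r * (Real.log r)^2)⁻¹) (Ioc 0 (Real.exp (-2))) := by
  have h1 : ContinuousOn (fun r : ℝ => -(Real.log r)⁻¹) (Icc 0 (Real.exp (-2))) := by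
    intro r hr
    rcases eq_or_lt_of_le hr.1 with h | h
    · subst h
      have : Tendsto (fun r : ℝ => -(Real.log r)⁻¹) (𝓝[≠] 0) (𝓝 (-0)) :=
        (tendsto_inv_atBot_zero.comp Real.tendsto_log_nhdsNE_zero).neg
      have hc : ContinuousAt (fun r : ℝ => -(Real.log r)⁻¹) 0 := by
        rw [continuousAt_iff_punctured_nhds]
        simpa using this
      exact hc.continuousWithinAt
    · have hl : Real.log r ≤ -2 := by
        have := Real.log_le_log h hr.2
        rwa [Real.log_exp] at this
      exact (((Real.continuousAt_log h.ne').inv₀ (by linarith)).neg).continuousWithinAt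
  refine intervalIntegral.integrableOn_deriv_of_nonneg h1 ?_ ?_
  · intro r hr
    have hl : Real.log r ≤ -2 := by
      have := Real.log_le_log hr.1 hr.2.le
      rwa [Real.log_exp] at this
    have hl0 : Real.log r ≠ 0 := by linarith
    have hr0 := hr.1.ne'
    have := ((Real.hasDerivAt_log hr0).inv hl0).neg
    refine HasDerivAt.congr_deriv (f := fun r : ℝ => -(Real.log r)⁻¹) this ?_
    field_simp
  · intro r hr
    have := hr.1
    positivity

lemma cusp_bound_integrable :
    Integrable (fun x : EuclideanSpace ℝ (Fin 2) =>
      (Ioc 0 (Real.exp (-2))).indicator (fun r : ℝ => 5 * (1 / (r^2 * (Real.log r)^2))) ‖x‖) := by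
  rw [integrable_fun_norm_addHaar volume (f := (Ioc 0 (Real.exp (-2))).indicator
    (fun r : ℝ => 5 * (1 / (r^2 * (Real.log r)^2))))]
  have h := (cusp_radial_integrableOn.const_mul 5)
  rw [← IntegrableOn, ← integrable_indicator_iff measurableSet_Ioc] at h
  refine (h.integrableOn (s := Ioi 0)).congr_fun ?_ measurableSet_Ioi
  intro r hr
  have hr0 : r ≠ 0 := ne_of_gt hr
  by_cases hm : r ∈ Ioc 0 (Real.exp (-2))
  · simp only [Set.indicator_of_mem hm, finrank_euclideanSpace, Fintype.card_fin, smul_eq_mul]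
    norm_num
    field_simp
  · simp [Set.indicator_of_notMem hm]

lemma cigar_le {r r0 : ℝ} (hr : 0 < r) (hrr : r ≤ r0) (h0 : r0 ≤ Real.exp (-2)) :
    (1 / ((-Real.log r0) * (-Real.log r0 - 1))) / (r0^2 / (-Real.log r0 - 1) + r^2)
      ≤ 4 * (1 / (r^2 * (Real.log r)^2)) := by
  have hr0 : 0 < r0 := hr.trans_le hrr
  have hL : Real.log r0 ≤ -2 := by
    have := Real.log_le_log hr0 h0
    rwa [Real.log_exp] at this
  have hrl : Real.log r ≤ Real.log r0 := Real.log_le_log hr hrr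
  obtain ⟨L, hLd⟩ : ∃ L, L = -Real.log r0 := ⟨_, rfl⟩
  obtain ⟨t, ht⟩ : ∃ t, t = Real.log r0 - Real.log r := ⟨_, rfl⟩
  have e : Real.log r = -(L + t) := by rw [hLd, ht]; ring
  have ht0 : 0 ≤ t := by linarith
  have hL2 : 2 ≤ L := by linarith
  have htr : t * r ≤ r0 := by
    have h := Real.log_le_sub_one_of_pos (div_pos hr0 hr)
    rw [Real.log_div hr0.ne' hr.ne', ← ht] at h
    have h2 : t ≤ r0 / r := by linarith
    rwa [le_div_iff₀ hr] at h2
  have htr2 : (t * r)^2 ≤ r0^2 := by gcongr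
  rw [e, ← hLd, neg_sq]
  have hL1 : 0 < L - 1 := by linarith
  have hs : 0 < L + t := by linarith
  have e2 : (1 / (L * (L - 1))) / (r0^2 / (L - 1) + r^2) = 1 / (L * (r0^2 + r^2 * (L - 1))) := by
    field_simp
  rw [e2, mul_one_div, div_le_div_iff₀ (by positivity) (by positivity)]
  nlinarith [mul_nonneg (sq_nonneg r) (sq_nonneg (L - t)), mul_nonneg (sq_nonneg r0) (sub_nonneg.2 hL2),
    mul_nonneg (mul_nonneg (sq_nonneg r) (by linarith : 0 ≤ L)) (sub_nonneg.2 hL2)]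

lemma ucig_measurable (r0 : ℝ) : Measurable (ucig r0) := by
  unfold ucig cuspH
  refine Measurable.ite (measurableSet_le measurable_norm measurable_const) ?_ ?_ <;> fun_prop

lemma cuspH_measurable : Measurable cuspH := by
  unfold cuspH
  fun_prop

/-- **`L¹` convergence of the approximations.** As `r₀ ↓ 0`, the functions `u_{r₀}`
converge to the cusp conformal factor `h` in `L¹(B)`. -/
theorem ucig_tendsto_L1 :
    Tendsto (fun r0 : ℝ => ∫ x in ball (0 : EuclideanSpace ℝ (Fin 2)) 1,
        |ucig r0 x - cuspH x|) (𝓝[>] 0) (𝓝 0) := by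
  have hz : (0 : ℝ) = ∫ x in ball (0 : EuclideanSpace ℝ (Fin 2)) 1, (0 : ℝ) := by simp
  have hne : ∀ᵐ x : EuclideanSpace ℝ (Fin 2) ∂(volume.restrict (ball 0 1)), x ≠ 0 :=
    ae_restrict_of_ae (Measure.ae_ne volume 0)
  suffices hs : Tendsto (fun r0 : ℝ => ∫ x in ball (0 : EuclideanSpace ℝ (Fin 2)) 1,
        |ucig r0 x - cuspH x|) (𝓝[>] 0)
        (𝓝 (∫ x in ball (0 : EuclideanSpace ℝ (Fin 2)) 1, (0 : ℝ))) by
    rwa [← hz] at hs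
  refine tendsto_integral_filter_of_dominated_convergence
    (fun x : EuclideanSpace ℝ (Fin 2) =>
      (Ioc 0 (Real.exp (-2))).indicator (fun r : ℝ => 5 * (1 / (r^2 * (Real.log r)^2))) ‖x‖)
    ?_ ?_ cusp_bound_integrable.integrableOn ?_
  · refine Eventually.of_forall fun r0 => ?_
    have := ((ucig_measurable r0).sub cuspH_measurable).norm
    exact this.aestronglyMeasurable
  · have h1 : ∀ᶠ r0 : ℝ in 𝓝[>] 0, r0 ≤ Real.exp (-2) :=
      nhdsWithin_le_nhds (Iic_mem_nhds (Real.exp_pos _))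
    filter_upwards [h1] with r0 h0
    filter_upwards [hne] with x hx
    have hxp : 0 < ‖x‖ := norm_pos_iff.2 hx
    rw [Real.norm_eq_abs, abs_abs]
    by_cases h : ‖x‖ ≤ r0
    · rw [Set.indicator_of_mem (show ‖x‖ ∈ Ioc 0 (Real.exp (-2)) from ⟨hxp, h.trans h0⟩)]
      have hc := cigar_le hxp h h0
      have hr0 : 0 < r0 := hxp.trans_le h
      have hL : Real.log r0 ≤ -2 := by
        have := Real.log_le_log hr0 h0
        rwa [Real.log_exp] at this
      have hn : 0 ≤ (1 / ((-Real.log r0) * (-Real.log r0 - 1))) /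
          (r0^2 / (-Real.log r0 - 1) + ‖x‖^2) := by
        have h3 : 0 < -Real.log r0 := by linarith
        have h4 : 0 < -Real.log r0 - 1 := by linarith
        positivity
      have hh : 0 ≤ 1 / (‖x‖^2 * (Real.log ‖x‖)^2) := by positivity
      rw [ucig, if_pos h, cuspH, abs_le]
      constructor <;> linarith
    · rw [ucig, if_neg h, sub_self, abs_zero]
      refine Set.indicator_nonneg (fun r _ => ?_) _
      positivity
  · filter_upwards [hne] with x hx
    have hxp : 0 < ‖x‖ := norm_pos_iff.2 hx
    refine tendsto_const_nhds.congr' ?_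
    have h1 : ∀ᶠ r0 : ℝ in 𝓝[>] 0, r0 < ‖x‖ := nhdsWithin_le_nhds (Iio_mem_nhds hxp)
    filter_upwards [h1] with r0 h
    rw [ucig, if_neg (not_le.2 h), sub_self, abs_zero]
end

section
/- There is a universal constant C > 0 such that for every x ∈ B with 0 < |x| < 1, the quantity h(x)^{-1} |∇ log((1/2) log h)(x)|² is equal to (log|x| + 1)² / (log(|x| · |log|x||))², and this quantity is bounded above by C. -/
open Real MeasureTheory Metric Set Filter Topology

theorem cusp_hasDeriv (r : ℝ) (h0 : 0 < r) (h1 : r < 1)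
    (hg : log (r * |log r|) ≠ 0) :
    HasDerivAt (fun s : ℝ => log ((1/2) * log (1 / (s^2 * (log s)^2))))
      ((log r + 1) / (r * log r * log (r * |log r|))) r := by
  have hL : log r < 0 := Real.log_neg h0 h1
  have hlog : ∀ s : ℝ, (1/2) * log (1 / (s^2 * (log s)^2)) = - log (s * log s) := by
    intro s
    rw [← mul_pow, one_div ((s * log s) ^ 2), Real.log_inv, Real.log_pow]
    push_cast
    ring
  have hg2 : log (r * log r) ≠ 0 := by
    rw [abs_of_neg hL] at hg
    rwa [mul_neg, Real.log_neg_eq_log] at hg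
  have e : log (r * |log r|) = log (r * log r) := by
    rw [abs_of_neg hL, mul_neg, Real.log_neg_eq_log]
  simp_rw [hlog, Real.log_neg_eq_log]
  rw [e]
  have hm : HasDerivAt (fun s : ℝ => s * log s) (1 * log r + r * r⁻¹) r :=
    (hasDerivAt_id' r).mul (Real.hasDerivAt_log h0.ne')
  have := (hm.log (mul_ne_zero h0.ne' hL.ne)).log hg2
  convert this using 1
  have := hL.ne
  field_simp

theorem cusp_gradient_bound :
    ∃ C : ℝ, 0 < C ∧ ∀ x : EuclideanSpace ℝ (Fin 2), 0 < ‖x‖ → ‖x‖ < 1 →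
      (cuspH x)⁻¹ * ‖gradient (fun y => log ((1/2) * log (cuspH y))) x‖^2
          = (log ‖x‖ + 1)^2 / (log (‖x‖ * |log ‖x‖|))^2
        ∧ (cuspH x)⁻¹ * ‖gradient (fun y => log ((1/2) * log (cuspH y))) x‖^2 ≤ C := by
  refine ⟨4, by norm_num, fun x h0 h1 => ?_⟩
  have hL : log ‖x‖ < 0 := Real.log_neg h0 h1
  have e : log (‖x‖ * |log ‖x‖|) = log ‖x‖ + log (-log ‖x‖) := by
    rw [abs_of_neg hL, Real.log_mul h0.ne' (by linarith)]
  have b1 : log (-log ‖x‖) ≤ -log ‖x‖ - 1 := Real.log_le_sub_one_of_pos (by linarith)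
  have b2 : log (-log ‖x‖) ≤ -log ‖x‖ / 2 := by
    have h := Real.log_le_sub_one_of_pos (x := -log ‖x‖ / 2) (by linarith)
    rw [Real.log_div (by linarith) (by norm_num)] at h
    have := Real.log_two_lt_d9
    linarith
  have hg : log (‖x‖ * |log ‖x‖|) ≠ 0 := by rw [e]; linarith
  have hx : x ≠ 0 := norm_pos_iff.mp h0
  have hd : DifferentiableAt ℝ (fun y : EuclideanSpace ℝ (Fin 2) => ‖y‖) x :=
    (contDiffAt_norm ℝ hx (n := 1)).differentiableAt (by norm_num)
  have hf := (cusp_hasDeriv ‖x‖ h0 h1 hg).comp_hasFDerivAt x hd.hasFDerivAt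
  have hn : ‖gradient (fun y => log ((1/2) * log (cuspH y))) x‖
      = |(log ‖x‖ + 1) / (‖x‖ * log ‖x‖ * log (‖x‖ * |log ‖x‖|))| := by
    unfold gradient
    rw [LinearIsometryEquiv.norm_map]
    have : fderiv ℝ (fun y => log ((1/2) * log (cuspH y))) x = _ := hf.fderiv
    rw [this, norm_smul, norm_fderiv_norm hd, mul_one, Real.norm_eq_abs]
  have main : (cuspH x)⁻¹ * ‖gradient (fun y => log ((1/2) * log (cuspH y))) x‖^2
          = (log ‖x‖ + 1)^2 / (log (‖x‖ * |log ‖x‖|))^2 := by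
    rw [hn, sq_abs, cuspH]
    have := hL.ne
    generalize log (‖x‖ * |log ‖x‖|) = g at *
    field_simp
  refine ⟨main, ?_⟩
  rw [main, div_le_iff₀ (by positivity), e]
  nlinarith
end

section
/- There is a universal constant C > 0 such that for every r0 ∈ (0, e^{-1}) and every x ∈ B, u_{r0}(x)^{-1} |∇ log((1/2) log u_{r0})(x)|² ≤ C (the gradient taken wherever u_{r0} is differentiable, i.e. everywhere on B, u_{r0} being C¹). -/
open Real MeasureTheory Metric Set Filter Topology

lemma aux_log_le (s : ℝ) (hs : 0 < s) : log s ≤ s / 2 := by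
  have h1 := Real.log_le_sub_one_of_pos (show 0 < s / 2 by positivity)
  rw [Real.log_div hs.ne' (by norm_num)] at h1
  have := Real.log_two_lt_d9
  linarith

lemma aux_fderiv (q : ℝ → ℝ) (q' : ℝ) (x : EuclideanSpace ℝ (Fin 2))
    (hq : HasDerivAt q q' (‖x‖^2)) (hpos : 0 < q (‖x‖^2)) (hlog : log (q (‖x‖^2)) < 0) :
    DifferentiableAt ℝ (fun y : EuclideanSpace ℝ (Fin 2) =>
      log ((1/2) * log ((q (‖y‖^2))⁻¹))) x ∧
    ‖fderiv ℝ (fun y : EuclideanSpace ℝ (Fin 2) => log ((1/2) * log ((q (‖y‖^2))⁻¹))) x‖^2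
      = 4 * ‖x‖^2 * (q' / (q (‖x‖^2) * log (q (‖x‖^2))))^2 := by
  have hG : HasDerivAt (fun t => log ((1/2) * log ((q t)⁻¹)))
      (q' / (q (‖x‖^2) * log (q (‖x‖^2)))) (‖x‖^2) := by
    have h1 := (((hq.log hpos.ne').neg).const_mul (1/2 : ℝ)).log
      (by simp only [Pi.neg_apply]; intro h; linarith)
    have h2 : (fun t => log ((1/2) * log ((q t)⁻¹))) =
        fun t => log ((1/2) * (-(fun t => log (q t))) t) := by
      funext t; simp [Real.log_inv]
    rw [h2]
    convert h1 using 1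
    have := hlog.ne
    have := hpos.ne'
    simp only [Pi.neg_apply]
    field_simp
  have hF := hG.comp_hasFDerivAt x (hasStrictFDerivAt_norm_sq x).hasFDerivAt
  refine ⟨hF.differentiableAt, ?_⟩
  have h3 := hF.fderiv
  simp only [Function.comp_def] at h3
  rw [h3, norm_smul, ← Nat.cast_smul_eq_nsmul ℝ, norm_smul, innerSL_apply_norm, mul_pow, mul_pow]
  simp only [Real.norm_eq_abs, sq_abs]
  norm_num
  ring

lemma aux_final (t q q' l C : ℝ) (hq : 0 < q) (hl : l < 0)
    (h : 4 * t * q' ^ 2 ≤ C * (q * l ^ 2)) :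
    q * (4 * t * (q' / (q * l)) ^ 2) ≤ C := by
  have : q * (4 * t * (q' / (q * l)) ^ 2) = (4 * t * q' ^ 2) / (q * l^2) := by
    have := hl.ne
    field_simp
  rw [this, div_le_iff₀ (by have := hl.ne; positivity)]
  exact h

lemma aux_norm_grad (f : EuclideanSpace ℝ (Fin 2) → ℝ) (x : EuclideanSpace ℝ (Fin 2)) :
    ‖gradient f x‖ = ‖fderiv ℝ f x‖ := by
  simp [gradient]

theorem ucig_gradient_bound :
    ∃ C : ℝ, 0 < C ∧ ∀ r0 : ℝ, 0 < r0 → r0 < exp (-1) →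
      ∀ x ∈ ball (0 : EuclideanSpace ℝ (Fin 2)) 1,
        (ucig r0 x)⁻¹ * ‖gradient (fun y => log ((1/2) * log (ucig r0 y))) x‖^2 ≤ C := by
  refine ⟨4, by norm_num, ?_⟩
  intro r0 h0 h1 x hx
  rw [mem_ball_zero_iff] at hx
  rw [aux_norm_grad]
  have hL : 1 < -log r0 := by
    have := Real.log_lt_log h0 h1
    rw [Real.log_exp] at this
    linarith
  obtain ⟨L, hLdef⟩ : ∃ L, L = -log r0 := ⟨_, rfl⟩
  rw [← hLdef] at hL
  have hL1 : 0 < L - 1 := by linarith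
  have hL0 : 0 < L := by linarith
  by_cases hxr : ‖x‖ ≤ r0
  · -- the cap
    set q : ℝ → ℝ := fun t => (L * (L - 1)) * (r0^2 / (L - 1) + t) with hqdef
    have hcap : ∀ y : EuclideanSpace ℝ (Fin 2), ‖y‖ ≤ r0 → ucig r0 y = (q (‖y‖^2))⁻¹ := by
      intro y hy
      simp only [ucig, if_pos hy, hqdef, ← hLdef]
      rw [mul_inv, one_div, div_eq_mul_inv]
    have hq : HasDerivAt q (L * (L - 1)) (‖x‖^2) := by
      have := ((hasDerivAt_id (‖x‖^2)).const_add (r0^2 / (L - 1))).const_mul (L * (L - 1))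
      simpa [hqdef] using this
    have hpos : 0 < q (‖x‖^2) := by simp only [hqdef]; positivity
    have hle : q (‖x‖^2) ≤ r0^2 * L^2 := by
      have h2 : ‖x‖^2 ≤ r0^2 := by gcongr
      calc q (‖x‖^2) ≤ (L * (L - 1)) * (r0^2 / (L - 1) + r0^2) := by
            simp only [hqdef]; gcongr
        _ = r0^2 * L^2 := by field_simp; ring
    have hlog : log (q (‖x‖^2)) ≤ -L := by
      have h2 := Real.log_le_log hpos hle
      rw [Real.log_mul (x := r0^2) (y := L^2) (by positivity) (by positivity), Real.log_pow, Real.log_pow] at h2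
      have := aux_log_le L hL0
      push_cast at h2
      linarith
    by_cases hd : DifferentiableAt ℝ (fun y => log ((1/2) * log (ucig r0 y))) x
    · obtain ⟨hd2, hn⟩ := aux_fderiv q _ x hq hpos (by linarith)
      have hu : UniqueDiffWithinAt ℝ (closedBall (0 : EuclideanSpace ℝ (Fin 2)) r0) x := by
        refine uniqueDiffWithinAt_convex (convex_closedBall _ _) ?_ ?_
        · exact ⟨0, ball_subset_interior_closedBall (by simpa using h0)⟩
        · exact subset_closure (by simpa using hxr)
      have heq : fderiv ℝ (fun y => log ((1/2) * log (ucig r0 y))) x =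
          fderiv ℝ (fun y : EuclideanSpace ℝ (Fin 2) => log ((1/2) * log ((q (‖y‖^2))⁻¹))) x := by
        rw [← hd.fderivWithin hu, ← hd2.fderivWithin hu]
        apply fderivWithin_congr
        · intro y hy
          simp only [hcap y (by simpa using hy)]
        · simp only [hcap x hxr]
      rw [heq, hn, hcap x hxr, inv_inv]
      apply aux_final _ _ _ _ _ hpos (by linarith)
      have h3 : L^2 ≤ log (q (‖x‖^2))^2 := by nlinarith
      have h4 : L * (L - 1) * ‖x‖^2 ≤ q (‖x‖^2) := by
        simp only [hqdef]
        gcongr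
        have : 0 ≤ r0^2 / (L-1) := by positivity
        linarith
      calc 4 * ‖x‖^2 * (L * (L-1))^2 = 4 * ((L * (L - 1) * ‖x‖^2) * (L * (L-1))) := by ring
        _ ≤ 4 * (q (‖x‖^2) * log (q (‖x‖^2))^2) := by
          gcongr
          nlinarith
    · rw [fderiv_zero_of_not_differentiableAt hd]
      simp
  · -- the cusp
    push Not at hxr
    have hx0 : 0 < ‖x‖ := h0.trans hxr
    obtain ⟨s, hs⟩ : ∃ s, s = -log ‖x‖ := ⟨_, rfl⟩
    have hs0 : 0 < s := by have := Real.log_neg hx0 hx; linarith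
    set q : ℝ → ℝ := fun t => t * (log t / 2)^2 with hqdef
    have hlx : log (‖x‖^2) = -2 * s := by rw [Real.log_pow]; push_cast; linarith
    have hcusp : ∀ y : EuclideanSpace ℝ (Fin 2), r0 < ‖y‖ → ucig r0 y = (q (‖y‖^2))⁻¹ := by
      intro y hy
      simp only [ucig, if_neg (not_le.mpr hy), hqdef, cuspH, Real.log_pow, one_div]
      congr 3
      push_cast
      ring
    have hqx : q (‖x‖^2) = ‖x‖^2 * s^2 := by
      simp only [hqdef, hlx]; ring
    have hpos : 0 < q (‖x‖^2) := by rw [hqx]; positivity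
    have hlq : log (q (‖x‖^2)) = 2 * (log s - s) := by
      rw [hqx, Real.log_mul (by positivity) (by positivity), hlx, Real.log_pow]
      push_cast; ring
    have hls1 := Real.log_le_sub_one_of_pos hs0
    have hls2 := aux_log_le s hs0
    have hlneg : log (q (‖x‖^2)) < 0 := by rw [hlq]; linarith
    have hq : HasDerivAt q (s^2 - s) (‖x‖^2) := by
      have h5 : ‖x‖^2 ≠ 0 := by positivity
      have := (hasDerivAt_id (‖x‖^2)).mul (((Real.hasDerivAt_log h5).div_const 2).pow 2)
      refine HasDerivAt.congr_deriv (f := q) this ?_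
      simp only [id, Pi.pow_apply, hlx]
      field_simp
      push_cast
      ring
    obtain ⟨hd2, hn⟩ := aux_fderiv q _ x hq hpos hlneg
    have heq : fderiv ℝ (fun y => log ((1/2) * log (ucig r0 y))) x =
        fderiv ℝ (fun y : EuclideanSpace ℝ (Fin 2) => log ((1/2) * log ((q (‖y‖^2))⁻¹))) x := by
      apply Filter.EventuallyEq.fderiv_eq
      filter_upwards [(continuous_norm.tendsto x).eventually (lt_mem_nhds hxr)] with y hy
      rw [hcusp y hy]
    rw [heq, hn, hcusp x hxr, inv_inv]
    apply aux_final _ _ _ _ _ hpos hlneg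
    rw [hlq, hqx]
    have key : (s - 1)^2 ≤ (2 * (log s - s))^2 := by
      rw [show (2 * (log s - s))^2 = (2 * (s - log s))^2 by ring]
      apply sq_le_sq'
      · linarith
      · linarith
    calc 4 * ‖x‖^2 * (s^2 - s)^2 = 4 * (‖x‖^2 * s^2 * (s-1)^2) := by ring
      _ ≤ _ := by gcongr
end

section
/- For r0 ∈ (0, e^{-1}) and t > 0 define ũ_{r0}(0,t) = ε(r0)/(δ(r0) e^{4t/ε(r0)}) (the value at the origin at time t of the cigar Ricci flow starting from ũ_{r0}). Then −log ũ_{r0}(0,t) = 2 log r0 + log(−log r0) + 4t(−log r0)(−log r0 − 1). Moreover, for each fixed t ∈ (0, 1/4), this expression is minimized over r0 ∈ (0, e^{-1}) exactly at r0 = e^{-1/(4t)}, and sup_{r0 ∈ (0,e^{-1})} ũ_{r0}(0,t) = 4t · e^{1/(4t) + 1}. -/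
open Real MeasureTheory Metric Set Filter Topology

/-- `δ(r₀) = r₀²/(-log r₀ - 1)`. -/
noncomputable def cigDelta (r0 : ℝ) : ℝ := r0^2 / (-Real.log r0 - 1)

/-- `ε(r₀) = 1/((-log r₀)(-log r₀ - 1))`. -/
noncomputable def cigEps (r0 : ℝ) : ℝ := 1 / ((-Real.log r0) * (-Real.log r0 - 1))

/-- The value at the origin at time `t` of the cigar Ricci flow starting from
`ε(r₀)/(δ(r₀)+|x|²)`. -/
noncomputable def cigOrigin (r0 t : ℝ) : ℝ :=
  cigEps r0 / (cigDelta r0 * Real.exp (4 * t / cigEps r0))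

lemma cig_form (r0 t : ℝ) (h0 : 0 < r0) (h1 : r0 < exp (-1)) :
    1 < -log r0 ∧ cigOrigin r0 t
      = exp (-(2 * log r0 + log (-log r0) + 4 * t * (-log r0) * (-log r0 - 1))) := by
  have hL : 1 < -log r0 := by
    have := (Real.log_lt_iff_lt_exp h0).2 h1
    linarith
  refine ⟨hL, ?_⟩
  obtain ⟨L, hLdef⟩ : ∃ L, L = -log r0 := ⟨_, rfl⟩
  have hlog : log r0 = -L := by linarith
  have hr : r0 = exp (-L) := by rw [← hlog, Real.exp_log h0]
  unfold cigOrigin cigEps cigDelta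
  rw [hlog, hr]
  rw [hlog] at hL
  simp only [neg_neg] at hL ⊢
  have hL0 : 0 < L := by linarith
  have hL1 : L - 1 ≠ 0 := by linarith
  have e1 : -(2 * -L + log L + 4 * t * L * (L - 1))
      = L + L - log L - (4 * t * L * (L - 1)) := by ring
  rw [e1, Real.exp_sub, Real.exp_sub, Real.exp_add, Real.exp_log hL0, Real.exp_neg]
  have e2 : 4 * t / (1 / (L * (L - 1))) = 4 * t * L * (L - 1) := by
    field_simp
  rw [e2]
  have := Real.exp_ne_zero L
  field_simp

lemma cig_ineq (t L : ℝ) (ht : 0 < t) (hL : 1 < L) (hne : L ≠ 1 / (4 * t)) :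
    -log (4 * t) - 1 / (4 * t) - 1 < -2 * L + log L + 4 * t * L * (L - 1) := by
  have hL0 : 0 < L := by linarith
  have h4 : 0 < 4 * t := by linarith
  have hs : 0 < 4 * t * L := by positivity
  have hs1 : (4 * t * L)⁻¹ ≠ 1 := by
    intro h
    apply hne
    have := inv_eq_one.1 h
    field_simp
    linarith
  have h := Real.log_lt_sub_one_of_pos (inv_pos.2 hs) hs1
  rw [Real.log_inv, Real.log_mul h4.ne' hL0.ne'] at h
  have key : 0 ≤ -2 * L + 4 * t * L * (L - 1) + 1 / (4 * t) + 1 + 1 - (4 * t * L)⁻¹ := by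
    have : -2 * L + 4 * t * L * (L - 1) + 1 / (4 * t) + 1 + 1 - (4 * t * L)⁻¹
        = (4 * t * L - 1) ^ 2 * (L - 1) / (4 * t * L) := by
      field_simp
      ring
    rw [this]
    have : 0 ≤ L - 1 := by linarith
    positivity
  linarith

/-- **Sharp lower bound at the origin via the cigar family.**
`-log ũ_{r₀}(0,t) = 2 log r₀ + log(-log r₀) + 4t(-log r₀)(-log r₀ - 1)`; for fixed
`t ∈ (0,1/4)` this is minimized over `r₀ ∈ (0,e⁻¹)` exactly at `r₀ = e^{-1/(4t)}`,
and `sup_{r₀} ũ_{r₀}(0,t) = 4t e^{1/(4t)+1}`, the sup being attained. -/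
theorem cigar_origin_optimization :
    (∀ r0 t : ℝ, 0 < r0 → r0 < exp (-1) →
      -log (cigOrigin r0 t)
        = 2 * log r0 + log (-log r0) + 4 * t * (-log r0) * (-log r0 - 1)) ∧
    (∀ t : ℝ, 0 < t → t < 1/4 →
      (∀ r0 ∈ Ioo (0:ℝ) (exp (-1)), r0 ≠ exp (-(1/(4*t))) →
        -log (cigOrigin (exp (-(1/(4*t)))) t) < -log (cigOrigin r0 t)) ∧
      IsGreatest ((fun r0 => cigOrigin r0 t) '' Ioo (0:ℝ) (exp (-1)))
        (4 * t * exp (1/(4*t) + 1))) := by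
  refine ⟨fun r0 t h0 h1 => by rw [(cig_form r0 t h0 h1).2, Real.log_exp, neg_neg], ?_⟩
  intro t ht ht4
  have h4 : 0 < 4 * t := by linarith
  have ha : 1 < 1 / (4 * t) := by
    rw [lt_div_iff₀ h4]; linarith
  have hmem : exp (-(1/(4*t))) ∈ Ioo (0:ℝ) (exp (-1)) :=
    ⟨Real.exp_pos _, Real.exp_lt_exp.2 (by linarith)⟩
  have hval : cigOrigin (exp (-(1/(4*t)))) t = exp (log (4 * t) + 1 / (4 * t) + 1) := by
    rw [(cig_form _ t hmem.1 hmem.2).2, Real.log_exp, neg_neg, one_div, Real.log_inv]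
    congr 1
    field_simp
    ring
  have hval2 : 4 * t * exp (1/(4*t) + 1) = exp (log (4 * t) + 1 / (4 * t) + 1) := by
    rw [add_assoc, Real.exp_add (log (4 * t)), Real.exp_log h4]
  have hlt : ∀ r0 ∈ Ioo (0:ℝ) (exp (-1)), r0 ≠ exp (-(1/(4*t))) →
      -(log (4 * t) + 1 / (4 * t) + 1)
        < 2 * log r0 + log (-log r0) + 4 * t * (-log r0) * (-log r0 - 1) := by
    intro r0 hr hne
    have h := cig_ineq t (-log r0) ht (cig_form r0 t hr.1 hr.2).1 (by
      intro h
      apply hne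
      rw [← h, neg_neg, Real.exp_log hr.1])
    linarith
  refine ⟨?_, ⟨⟨_, hmem, ?_⟩, ?_⟩⟩
  · intro r0 hr hne
    rw [hval, (cig_form r0 t hr.1 hr.2).2, Real.log_exp, Real.log_exp, neg_neg]
    exact hlt r0 hr hne
  · show cigOrigin (exp (-(1/(4*t)))) t = _
    rw [hval, hval2]
  · rintro _ ⟨r0, hr, rfl⟩
    show cigOrigin r0 t ≤ _
    by_cases hne : r0 = exp (-(1/(4*t)))
    · rw [hne, hval, hval2]
    · rw [hval2, (cig_form r0 t hr.1 hr.2).2]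
      apply Real.exp_le_exp.2
      have := hlt r0 hr hne
      linarith
end
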